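/- Let Ω ⊂ ℝ^n be a bounded domain, Γ ⊂ 𝕊^n an open convex set containing the positive definite cone K⁺ and closed under addition of matrices of K⁺, and A : Ω̄×ℝ×ℝ^n → 𝕊^n continuous, twice differentiable in p with D²_pA continuous and regular. Fix ū ∈ C²(Ω̄), δ̄ > 0 and M₁ > 0. Then there exist positive constants K and δ, depending only on n, Ω, A, ū, δ̄ and M₁, such that for every F ∈ C¹(Γ) satisfying F1 and F2 and every admissible u ∈ C²(Ω̄) with |u|_{1;Ω} ≤ M₁ for which M_u[ū](x) − δ̄I ∈ Γ for all x ∈ Ω̄, the function η = e^{K(ū−u)} satisfies, pointwise in Ω, Lη ≥ δ·𝒯(M[u]) + K e^{K(ū−u)} [ F(M_u[ū] − δ̄I) − F(M[u]) ]. (Lemma 2.1 (i), case (a): the barrier estimate (2.8).) -/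

import Mathlib

open scoped BigOperators

noncomputable section

/-- Gradient vector `Du(x)`. -/
noncomputable def pgrad (n : ℕ) (u : EuclideanSpace ℝ (Fin n) → ℝ)
    (x : EuclideanSpace ℝ (Fin n)) : Fin n → ℝ :=
  fun i => fderiv ℝ u x (EuclideanSpace.single i 1)

/-- Hessian matrix `D²u(x)`. -/
noncomputable def phess (n : ℕ) (u : EuclideanSpace ℝ (Fin n) → ℝ)
    (x : EuclideanSpace ℝ (Fin n)) : Matrix (Fin n) (Fin n) ℝ :=
  Matrix.of fun i j =>
    fderiv ℝ (fun y => fderiv ℝ u y (EuclideanSpace.single j 1)) x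
      (EuclideanSpace.single i 1)

/-- `A^k_{ij} = ∂A_{ij}/∂p_k`. -/
noncomputable def ApDeriv (n : ℕ)
    (A : EuclideanSpace ℝ (Fin n) → ℝ → (Fin n → ℝ) → Matrix (Fin n) (Fin n) ℝ)
    (x : EuclideanSpace ℝ (Fin n)) (z : ℝ) (p : Fin n → ℝ) (k i j : Fin n) : ℝ :=
  deriv (fun t : ℝ => A x z (p + t • (Pi.single k 1 : Fin n → ℝ)) i j) 0

/-- The augmented Hessian `M[u] = D²u − A(·,u,Du)`. -/
noncomputable def MA (n : ℕ)
    (A : EuclideanSpace ℝ (Fin n) → ℝ → (Fin n → ℝ) → Matrix (Fin n) (Fin n) ℝ)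
    (u : EuclideanSpace ℝ (Fin n) → ℝ) (x : EuclideanSpace ℝ (Fin n)) :
    Matrix (Fin n) (Fin n) ℝ :=
  phess n u x - A x (u x) (pgrad n u x)

/-- `M_u[ū] = D²ū − A(·,u,Dū)`. -/
noncomputable def MAw (n : ℕ)
    (A : EuclideanSpace ℝ (Fin n) → ℝ → (Fin n → ℝ) → Matrix (Fin n) (Fin n) ℝ)
    (u ubar : EuclideanSpace ℝ (Fin n) → ℝ) (x : EuclideanSpace ℝ (Fin n)) :
    Matrix (Fin n) (Fin n) ℝ :=
  phess n ubar x - A x (u x) (pgrad n ubar x)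

/-- The linearized operator `Lv = F^{ij}(M[u])(D_{ij}v − A^k_{ij}(·,u,Du)D_k v)`. -/
noncomputable def Lop (n : ℕ)
    (A : EuclideanSpace ℝ (Fin n) → ℝ → (Fin n → ℝ) → Matrix (Fin n) (Fin n) ℝ)
    (F' : Matrix (Fin n) (Fin n) ℝ → Matrix (Fin n) (Fin n) ℝ)
    (u v : EuclideanSpace ℝ (Fin n) → ℝ) (x : EuclideanSpace ℝ (Fin n)) : ℝ :=
  ∑ i, ∑ j, F' (MA n A u x) i j *
    (phess n v x i j -
      ∑ k, ApDeriv n A x (u x) (pgrad n u x) k i j * pgrad n v x k)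

/-- `𝒯(r) = Σ_i F^{ii}(r)`, the trace of the gradient matrix of `F`. -/
noncomputable def Tcal (n : ℕ)
    (F' : Matrix (Fin n) (Fin n) ℝ → Matrix (Fin n) (Fin n) ℝ)
    (r : Matrix (Fin n) (Fin n) ℝ) : ℝ :=
  ∑ i, F' r i i

/-! Codimension-one convexity of `A` in `p` and compactness give, by Finsler's lemma, a constant
`C` with `D_e D_e A + δ̄ I + C e ⊗ e ≥ 0` for all relevant `(x, z, p)` and `e`. Contracting with the
positive matrix `F^{ij}` and Taylor expanding along the segment from `Du` to `Dū` with
`e = Dū - Du`, the remainder of `A` contributes at least `-(δ̄ 𝒯 + C F^{ij} e_i e_j) / 2` to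
`L(ū - u)`, while the concavity of `F` gives
`F^{ij} (M_u[ū] - δ̄ I - M[u])_{ij} ≥ F(M_u[ū] - δ̄ I) - F(M[u])`. The Hessian of `exp (K (ū - u))`
brings in the extra term `K F^{ij} e_i e_j`, which with `K = C` absorbs the loss in the
direction `e`; half of the `δ̄ 𝒯` coming from `δ̄ I` survives. -/

open Filter Matrix Set Topology

section CompactPenalization

variable {X ι : Type*} [TopologicalSpace X] {S : Set X}

lemma eventually_atTop_forall_add_mul_pos (hS : IsCompact S) {f g : X → ℝ}
    (hf : ContinuousOn f S) (hg : ContinuousOn g S) (hg_nonneg : ∀ x ∈ S, 0 ≤ g x)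
    (hfg : ∀ x ∈ S, g x = 0 → 0 < f x) :
    ∀ᶠ C in atTop, ∀ x ∈ S, 0 < f x + C * g x := by
  suffices ∀ᶠ C in atTop, ∀ x ∈ S, x ∈ S → 0 < f x + C * g x by
    filter_upwards [this] with C hC x hx using hC x hx hx
  refine hS.induction_on (p := fun t => ∀ᶠ C in atTop, ∀ x ∈ t, x ∈ S → 0 < f x + C * g x)
    (by simp) (fun s t hst ht => ht.mono fun C hC x hx => hC x (hst hx)) ?_ fun x hx => ?_
  · intro s t hs ht
    filter_upwards [hs, ht] with C hCs hCt x hx using hx.elim (hCs x) (hCt x)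
  · obtain ⟨C₀, hC₀⟩ : ∃ C₀, 0 < f x + C₀ * g x := by
      rcases (hg_nonneg x hx).eq_or_lt with hgx | hgx
      · exact ⟨0, by simpa using hfg x hx hgx.symm⟩
      · exact ⟨(1 - f x) / g x, by simp [hgx.ne']⟩
    refine ⟨_, (hf.add (hg.const_mul C₀) x hx).eventually_const_lt hC₀, ?_⟩
    filter_upwards [eventually_ge_atTop C₀] with C hC y (hy : 0 < f y + C₀ * g y) hyS
    have := mul_le_mul_of_nonneg_right hC (hg_nonneg y hyS)
    linarith

variable [Fintype ι] [DecidableEq ι]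

lemma dotProduct_penalized_mulVec (H : Matrix ι ι ℝ) (e ξ : ι → ℝ) (ε C : ℝ) :
    ξ ⬝ᵥ (H + ε • 1 + C • vecMulVec e e) *ᵥ ξ =
      ξ ⬝ᵥ H *ᵥ ξ + ε * (ξ ⬝ᵥ ξ) + C * (ξ ⬝ᵥ e) ^ 2 := by
  simp only [add_mulVec, smul_mulVec, one_mulVec, vecMulVec_mulVec, op_smul_eq_smul,
    dotProduct_add, dotProduct_smul, smul_eq_mul, dotProduct_comm e ξ, sq]

-- Finsler's lemma with a compact parameter: penalize on `S` times the unit sphere, then use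
-- homogeneity in `ξ`.
lemma eventually_atTop_forall_dotProduct_mulVec_nonneg (hS : IsCompact S)
    {H : X → Matrix ι ι ℝ} {e : X → ι → ℝ} (hH : ContinuousOn H S) (he : ContinuousOn e S)
    (hHe : ∀ x ∈ S, ∀ ξ, ξ ⬝ᵥ e x = 0 → 0 ≤ ξ ⬝ᵥ H x *ᵥ ξ) {ε : ℝ} (hε : 0 < ε) :
    ∀ᶠ C : ℝ in atTop, ∀ x ∈ S, ∀ ξ,
      0 ≤ ξ ⬝ᵥ (H x + ε • 1 + C • vecMulVec (e x) (e x)) *ᵥ ξ := by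
  have hHξ : ContinuousOn (fun q : X × (ι → ℝ) => (H q.1, q.2)) (S ×ˢ Metric.sphere 0 1) :=
    (hH.comp continuousOn_fst fun q hq => hq.1).prodMk continuousOn_snd
  have heξ : ContinuousOn (fun q : X × (ι → ℝ) => (e q.1, q.2)) (S ×ˢ Metric.sphere 0 1) :=
    (he.comp continuousOn_fst fun q hq => hq.1).prodMk continuousOn_snd
  have quadratic_continuous : Continuous fun m : Matrix ι ι ℝ × (ι → ℝ) =>
      m.2 ⬝ᵥ m.1 *ᵥ m.2 + ε * (m.2 ⬝ᵥ m.2) := by fun_prop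
  have square_continuous : Continuous fun m : (ι → ℝ) × (ι → ℝ) => (m.2 ⬝ᵥ m.1) ^ 2 := by
    fun_prop
  have pos_on_sphere := eventually_atTop_forall_add_mul_pos
    (hS.prod (isCompact_sphere (0 : ι → ℝ) 1))
    (f := fun q => q.2 ⬝ᵥ H q.1 *ᵥ q.2 + ε * (q.2 ⬝ᵥ q.2)) (g := fun q => (q.2 ⬝ᵥ e q.1) ^ 2)
    (quadratic_continuous.comp_continuousOn hHξ) (square_continuous.comp_continuousOn heξ)
    (fun q _ => sq_nonneg _) (by
      rintro ⟨x, ξ⟩ ⟨hx, hξ⟩ hξe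
      have hξ_pos : 0 < ξ ⬝ᵥ ξ :=
        dotProduct_star_self_pos_iff.2 (ne_zero_of_mem_unit_sphere ⟨ξ, hξ⟩)
      exact add_pos_of_nonneg_of_pos (hHe x hx ξ (pow_eq_zero_iff two_ne_zero |>.1 hξe))
        (mul_pos hε hξ_pos))
  filter_upwards [pos_on_sphere] with C hC x hx ξ
  rcases eq_or_ne ξ 0 with rfl | hξ
  · simp
  have pos_at_unit := hC (x, ‖ξ‖⁻¹ • ξ) ⟨hx, by simp [norm_smul, hξ]⟩
  rw [← dotProduct_penalized_mulVec] at pos_at_unit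
  simp only [mulVec_smul, dotProduct_smul, smul_dotProduct, smul_eq_mul] at pos_at_unit
  have hnorm : 0 < ‖ξ‖⁻¹ := inv_pos.2 (norm_pos_iff.2 hξ)
  exact (pos_of_mul_pos_right (pos_of_mul_pos_right pos_at_unit hnorm.le) hnorm.le).le

end CompactPenalization

section FrobeniusPairing

variable {ι : Type*} [Fintype ι]

/-- The contraction `P : M = ∑ P i j * M i j` of two square matrices, as a linear form in `M`.
For `P = (F^{ij})` it expresses the linearized operator. -/
def frobeniusPairing (P : Matrix ι ι ℝ) : Matrix ι ι ℝ →ₗ[ℝ] ℝ where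
  toFun M := ∑ i, ∑ j, P i j * M i j
  map_add' M N := by simp only [Matrix.add_apply, mul_add, Finset.sum_add_distrib]
  map_smul' c M := by
    simp only [Matrix.smul_apply, smul_eq_mul, mul_left_comm _ c, ← Finset.mul_sum,
      RingHom.id_apply]

lemma frobeniusPairing_apply (P M : Matrix ι ι ℝ) :
    frobeniusPairing P M = ∑ i, ∑ j, P i j * M i j := rfl

lemma frobeniusPairing_comm (P M : Matrix ι ι ℝ) :
    frobeniusPairing P M = frobeniusPairing M P := by
  simp only [frobeniusPairing_apply, mul_comm]

lemma frobeniusPairing_one [DecidableEq ι] (P : Matrix ι ι ℝ) :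
    frobeniusPairing P 1 = P.trace := by
  simp [frobeniusPairing_apply, Matrix.one_apply, Matrix.trace]

lemma frobeniusPairing_vecMulVec_self (P : Matrix ι ι ℝ) (v : ι → ℝ) :
    frobeniusPairing P (vecMulVec v v) = v ⬝ᵥ P *ᵥ v := by
  simp only [frobeniusPairing_apply, dotProduct, mulVec, vecMulVec_apply, Finset.mul_sum]
  congr! 2
  ring

lemma frobeniusPairing_nonneg {P H : Matrix ι ι ℝ} (hP : P.PosSemidef)
    (hH : ∀ ξ, 0 ≤ ξ ⬝ᵥ H *ᵥ ξ) : 0 ≤ frobeniusPairing P H := by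
  obtain ⟨m, v, rfl⟩ := posSemidef_iff_eq_sum_vecMulVec.1 hP
  rw [frobeniusPairing_comm, map_sum]
  refine Finset.sum_nonneg fun k _ => ?_
  simpa only [star_trivial, frobeniusPairing_vecMulVec_self] using hH (v k)

end FrobeniusPairing

section LineRestriction

variable {E : Type*} [NormedAddCommGroup E] [NormedSpace ℝ E]

lemma sub_le_of_concaveOn_of_hasDerivAt {V : Type*} [AddCommGroup V] [Module ℝ V] {Γ : Set V}
    {F : V → ℝ} (hF : ConcaveOn ℝ Γ F) {r s : V} (hr : r ∈ Γ) (hs : s ∈ Γ) {F' : ℝ}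
    (hF' : HasDerivAt (fun t : ℝ => F (r + t • (s - r))) F' 0) : F s - F r ≤ F' := by
  have concave_on_segment : ConcaveOn ℝ (Icc 0 1) (fun t : ℝ => F (r + t • (s - r))) := by
    refine ((hF.comp_affineMap (AffineMap.lineMap r s)).subset (fun t => hF.1.lineMap_mem hr hs)
      (convex_Icc _ _)).congr fun t _ => ?_
    simp [AffineMap.lineMap_apply, add_comm]
  simpa [slope_def_field] using concave_on_segment.slope_le_of_hasDerivAt
    (left_mem_Icc.2 zero_le_one) (right_mem_Icc.2 zero_le_one) zero_lt_one hF'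

lemma iteratedDeriv_two_comp_add_smul {φ : E → ℝ} (hφ : ContDiff ℝ 2 φ) (p e : E) (t : ℝ) :
    iteratedDeriv 2 (fun t : ℝ => φ (p + t • e)) t =
      iteratedFDeriv ℝ 2 φ (p + t • e) fun _ => e := by
  have deriv_line : deriv (fun t : ℝ => p + t • e) = fun _ => e := by
    ext1 t
    simpa using (((hasDerivAt_id t).smul_const e).const_add p).deriv
  have chain_rule := iteratedDeriv_vcomp_two (f := fun t : ℝ => p + t • e) (x := t)
    hφ.contDiffAt (by fun_prop)
  have deriv_two_line : iteratedDeriv 2 (fun t : ℝ => p + t • e) t = 0 := by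
    rw [iteratedDeriv_succ, iteratedDeriv_one, deriv_line, deriv_const]
  rwa [deriv_line, deriv_two_line, map_zero, add_zero] at chain_rule

lemma exists_taylor_remainder_two {φ : E → ℝ} (hφ : ContDiff ℝ 2 φ) (p e : E) :
    ∃ t ∈ Ioo (0 : ℝ) 1, φ (p + e) - φ p - fderiv ℝ φ p e =
      (iteratedFDeriv ℝ 2 φ (p + t • e) fun _ => e) / 2 := by
  have hline : ContDiff ℝ 2 fun t : ℝ => φ (p + t • e) := by fun_prop
  obtain ⟨t, ht, taylor⟩ := taylor_mean_remainder_lagrange_iteratedDeriv (n := 1)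
    (zero_ne_one' ℝ) hline.contDiffOn
  have deriv_at_zero : derivWithin (fun t : ℝ => φ (p + t • e)) (Icc 0 1) 0 = fderiv ℝ φ p e :=
    ((hφ.differentiable two_ne_zero p).hasFDerivAt.hasLineDerivAt e).hasDerivWithinAt.derivWithin
      (uniqueDiffOn_Icc_zero_one 0 (left_mem_Icc.2 zero_le_one))
  refine ⟨t, by simpa [uIoo] using ht, ?_⟩
  simpa [iteratedDerivWithin_one, deriv_at_zero, iteratedDeriv_two_comp_add_smul hφ, sub_sub]
    using taylor

end LineRestriction

section EntrywiseDerivatives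

variable {E ι : Type*} [NormedAddCommGroup E] [NormedSpace ℝ E]

/-- The entrywise derivative `(D_e a_{ij}(p))` of a matrix-valued map `a`. It is taken entry by
entry, so that no norm on matrices has to be chosen. -/
def dirDeriv (a : E → Matrix ι ι ℝ) (p e : E) : Matrix ι ι ℝ :=
  of fun i j => fderiv ℝ (fun p => a p i j) p e

/-- The entrywise second derivative `(D_e D_e a_{ij}(p))` of a matrix-valued map `a`. -/
def dirDerivTwo (a : E → Matrix ι ι ℝ) (p e : E) : Matrix ι ι ℝ :=
  of fun i j => iteratedFDeriv ℝ 2 (fun p => a p i j) p fun _ => e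

/-- The first-order Taylor remainder at `q` of the expansion at `p` of a matrix-valued map `a`. -/
def taylorRemainder (a : E → Matrix ι ι ℝ) (p q : E) : Matrix ι ι ℝ :=
  a q - a p - dirDeriv a p (q - p)

lemma dirDeriv_smul (a : E → Matrix ι ι ℝ) (p : E) (c : ℝ) (e : E) :
    dirDeriv a p (c • e) = c • dirDeriv a p e := by
  ext i j
  simp [dirDeriv]

variable [Fintype ι] {a : E → Matrix ι ι ℝ}

lemma contDiff_frobeniusPairing {k : WithTop ℕ∞} (P : Matrix ι ι ℝ)
    (ha : ∀ i j, ContDiff ℝ k fun p => a p i j) :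
    ContDiff ℝ k fun p => frobeniusPairing P (a p) := by
  simp only [frobeniusPairing_apply]
  fun_prop

lemma fderiv_frobeniusPairing (P : Matrix ι ι ℝ) {p : E}
    (ha : ∀ i j, DifferentiableAt ℝ (fun p => a p i j) p) (e : E) :
    fderiv ℝ (fun p => frobeniusPairing P (a p)) p e = frobeniusPairing P (dirDeriv a p e) := by
  have := HasFDerivAt.fun_sum fun i (_ : i ∈ Finset.univ) =>
    HasFDerivAt.fun_sum fun j (_ : j ∈ Finset.univ) => (ha i j).hasFDerivAt.const_mul (P i j)
  simp [frobeniusPairing_apply, this.fderiv, dirDeriv]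

lemma iteratedFDeriv_two_frobeniusPairing (P : Matrix ι ι ℝ)
    (ha : ∀ i j, ContDiff ℝ 2 fun p => a p i j) (p e : E) :
    (iteratedFDeriv ℝ 2 (fun p => frobeniusPairing P (a p)) p fun _ => e) =
      frobeniusPairing P (dirDerivTwo a p e) := by
  simp only [frobeniusPairing_apply, dirDerivTwo, of_apply]
  rw [iteratedFDeriv_fun_sum_apply (by fun_prop), _root_.sum_apply]
  refine Finset.sum_congr rfl fun i _ => ?_
  rw [iteratedFDeriv_fun_sum_apply (by fun_prop), _root_.sum_apply]
  refine Finset.sum_congr rfl fun j _ => ?_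
  exact DFunLike.congr_fun
    (iteratedFDeriv_const_smul_apply' (a := P i j) (ha i j).contDiffAt) fun _ => e

end EntrywiseDerivatives

section AlmostConvexity

variable {Y E ι : Type*} [TopologicalSpace Y] [NormedAddCommGroup E] [NormedSpace ℝ E] {S : Set Y}

lemma continuousOn_dirDerivTwo {a : Y → E → Matrix ι ι ℝ}
    (ha : ∀ i j, ContinuousOn
      (fun q : Y × E => iteratedFDeriv ℝ 2 (fun p => a q.1 p i j) q.2) (S ×ˢ univ)) :
    ContinuousOn (fun q : Y × E × E => dirDerivTwo (a q.1) q.2.1 q.2.2) (S ×ˢ univ) := by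
  refine continuousOn_pi.2 fun i => continuousOn_pi.2 fun j => ?_
  have base : ContinuousOn
      (fun q : Y × E × E => iteratedFDeriv ℝ 2 (fun p => a q.1 p i j) q.2.1) (S ×ˢ univ) :=
    (ha i j).comp (f := fun q : Y × E × E => (q.1, q.2.1)) (by fun_prop)
      fun q hq => ⟨hq.1, mem_univ _⟩
  exact base.eval (g := fun q : Y × E × E => fun _ : Fin 2 => q.2.2) (by fun_prop)

variable [Fintype ι]

lemma dotProduct_dirDerivTwo_mulVec {a : E → Matrix ι ι ℝ}
    (ha : ∀ i j, ContDiff ℝ 2 fun p => a p i j) (p e : E) (ξ : ι → ℝ) :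
    ξ ⬝ᵥ dirDerivTwo a p e *ᵥ ξ =
      iteratedDeriv 2 (fun t : ℝ => ∑ i, ∑ j, a (p + t • e) i j * ξ i * ξ j) 0 := by
  have along_line := iteratedDeriv_two_comp_add_smul
    (contDiff_frobeniusPairing (vecMulVec ξ ξ) ha) p e 0
  rw [iteratedFDeriv_two_frobeniusPairing _ ha, zero_smul, add_zero, frobeniusPairing_comm,
    frobeniusPairing_vecMulVec_self] at along_line
  rw [← along_line]
  simp only [frobeniusPairing_comm (vecMulVec ξ ξ), frobeniusPairing_apply, vecMulVec_apply,
    mul_assoc]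

lemma neg_le_frobeniusPairing_taylorRemainder [DecidableEq ι] {a : (ι → ℝ) → Matrix ι ι ℝ}
    (ha : ∀ i j, ContDiff ℝ 2 fun p => a p i j) {p q : ι → ℝ} {ε C : ℝ}
    (h : ∀ t ∈ Ioo (0 : ℝ) 1, ∀ ξ, 0 ≤ ξ ⬝ᵥ (dirDerivTwo a (p + t • (q - p)) (q - p) + ε • 1 +
      C • vecMulVec (q - p) (q - p)) *ᵥ ξ)
    {P : Matrix ι ι ℝ} (hP : P.PosSemidef) :
    -(ε * P.trace + C * ((q - p) ⬝ᵥ P *ᵥ (q - p))) / 2 ≤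
      frobeniusPairing P (taylorRemainder a p q) := by
  obtain ⟨t, ht, taylor⟩ :=
    exists_taylor_remainder_two (contDiff_frobeniusPairing P ha) p (q - p)
  rw [add_sub_cancel, fderiv_frobeniusPairing P fun i j => (ha i j).differentiable two_ne_zero p,
    iteratedFDeriv_two_frobeniusPairing P ha, ← map_sub, ← map_sub,
    ← taylorRemainder] at taylor
  have nonneg := frobeniusPairing_nonneg hP (h t ht)
  simp only [map_add, map_smul, smul_eq_mul, frobeniusPairing_one,
    frobeniusPairing_vecMulVec_self] at nonneg
  linarith

lemma eventually_atTop_forall_neg_le_frobeniusPairing_taylorRemainder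
    {a : Y → (ι → ℝ) → Matrix ι ι ℝ} (hS : IsCompact S)
    (ha : ∀ y ∈ S, ∀ i j, ContDiff ℝ 2 fun p => a y p i j)
    (ha_cont : ∀ i j, ContinuousOn
      (fun q : Y × (ι → ℝ) => iteratedFDeriv ℝ 2 (fun p => a q.1 p i j) q.2) (S ×ˢ univ))
    (ha_reg : ∀ y ∈ S, ∀ p e ξ, ξ ⬝ᵥ e = 0 → 0 ≤ ξ ⬝ᵥ dirDerivTwo (a y) p e *ᵥ ξ)
    {ε : ℝ} (hε : 0 < ε) (R : ℝ) :
    ∀ᶠ C : ℝ in atTop, ∀ y ∈ S, ∀ p q : ι → ℝ, ‖p‖ ≤ R → ‖q‖ ≤ R →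
      ∀ P : Matrix ι ι ℝ, P.PosSemidef →
        -(ε * P.trace + C * ((q - p) ⬝ᵥ P *ᵥ (q - p))) / 2 ≤
          frobeniusPairing P (taylorRemainder (a y) p q) := by
  classical
  have hcompact := hS.prod ((isCompact_closedBall (0 : ι → ℝ) R).prod
    (isCompact_closedBall (0 : ι → ℝ) (R + R)))
  filter_upwards [eventually_atTop_forall_dotProduct_mulVec_nonneg hcompact
    ((continuousOn_dirDerivTwo ha_cont).mono (prod_mono_right (subset_univ _)))
    (continuous_snd.snd.continuousOn) (fun q hq => ha_reg q.1 hq.1 q.2.1 q.2.2) hε]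
    with C hC y hy p q hp hq P hP
  have hsegment : ∀ t ∈ Ioo (0 : ℝ) 1, p + t • (q - p) ∈ Metric.closedBall 0 R := fun t ht =>
    (convex_closedBall 0 R).add_smul_sub_mem (by simpa using hp) (by simpa using hq)
      (Ioo_subset_Icc_self ht)
  have hdiff : q - p ∈ Metric.closedBall 0 (R + R) := by
    simpa using (norm_sub_le q p).trans (add_le_add hq hp)
  exact neg_le_frobeniusPairing_taylorRemainder (ha y hy)
    (fun t ht => hC (y, p + t • (q - p), q - p) ⟨hy, hsegment t ht, hdiff⟩) hP

end AlmostConvexity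

section GradientHessian

variable {n : ℕ} {u v w : EuclideanSpace ℝ (Fin n) → ℝ} {x : EuclideanSpace ℝ (Fin n)}

lemma eventually_differentiableAt_of_contDiffAt {E F : Type*} [NormedAddCommGroup E]
    [NormedSpace ℝ E] [NormedAddCommGroup F] [NormedSpace ℝ F] {f : E → F} {x : E}
    (hf : ContDiffAt ℝ 1 f x) : ∀ᶠ y in 𝓝 x, DifferentiableAt ℝ f y :=
  (hf.eventually (by simp)).mono fun _ hy => hy.differentiableAt one_ne_zero

lemma norm_le_sqrt_sum_sq {ι : Type*} [Fintype ι] (v : ι → ℝ) : ‖v‖ ≤ √(∑ i, v i ^ 2) :=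
  (pi_norm_le_iff_of_nonneg (Real.sqrt_nonneg _)).2 fun i => Real.abs_le_sqrt
    (Finset.single_le_sum (f := fun i => v i ^ 2) (fun _ _ => sq_nonneg _) (Finset.mem_univ i))

lemma continuousAt_pgrad (hu : ContDiffAt ℝ 1 u x) : ContinuousAt (pgrad n u) x :=
  continuousAt_pi.2 fun _ => (hu.continuousAt_fderiv one_ne_zero).clm_apply continuousAt_const

lemma differentiableAt_pgrad_apply (hu : ContDiffAt ℝ 2 u x) (j : Fin n) :
    DifferentiableAt ℝ (fun y => pgrad n u y j) x :=
  ((hu.fderiv_right (m := 1) (by norm_num)).differentiableAt one_ne_zero).clm_apply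
    (differentiableAt_const _)

lemma pgrad_sub (hv : DifferentiableAt ℝ v x) (hu : DifferentiableAt ℝ u x) :
    pgrad n (fun y => v y - u y) x = pgrad n v x - pgrad n u x := by
  ext i
  simp [pgrad, fderiv_fun_sub hv hu]

lemma pgrad_exp_mul (hw : DifferentiableAt ℝ w x) (K : ℝ) :
    pgrad n (fun y => Real.exp (K * w y)) x = (K * Real.exp (K * w x)) • pgrad n w x := by
  ext i
  simp only [pgrad, (hw.hasFDerivAt.const_mul K).exp.fderiv, Pi.smul_apply,
    _root_.smul_apply, smul_eq_mul]
  ring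

lemma phess_apply (u : EuclideanSpace ℝ (Fin n) → ℝ) (x : EuclideanSpace ℝ (Fin n))
    (i j : Fin n) : phess n u x i j = pgrad n (fun y => pgrad n u y j) x i := rfl

lemma pgrad_congr (h : u =ᶠ[𝓝 x] v) : pgrad n u x = pgrad n v x := by
  ext i
  simp only [pgrad, h.fderiv_eq]

lemma phess_sub (hv : ContDiffAt ℝ 2 v x) (hu : ContDiffAt ℝ 2 u x) :
    phess n (fun y => v y - u y) x = phess n v x - phess n u x := by
  ext i j
  have pgrad_sub_near : (fun y => pgrad n (fun y => v y - u y) y j) =ᶠ[𝓝 x]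
      fun y => pgrad n v y j - pgrad n u y j := by
    filter_upwards [eventually_differentiableAt_of_contDiffAt (hv.of_le one_le_two),
      eventually_differentiableAt_of_contDiffAt (hu.of_le one_le_two)] with y hvy huy
    rw [pgrad_sub hvy huy, Pi.sub_apply]
  rw [phess_apply, pgrad_congr pgrad_sub_near, pgrad_sub (differentiableAt_pgrad_apply hv j)
    (differentiableAt_pgrad_apply hu j)]
  rfl

lemma pgrad_mul (hv : DifferentiableAt ℝ v x) (hu : DifferentiableAt ℝ u x) :
    pgrad n (fun y => v y * u y) x = v x • pgrad n u x + u x • pgrad n v x := by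
  ext i
  simp [pgrad, fderiv_fun_mul hv hu]

lemma pgrad_const_mul (hu : DifferentiableAt ℝ u x) (c : ℝ) :
    pgrad n (fun y => c * u y) x = c • pgrad n u x := by
  ext i
  simp [pgrad, fderiv_const_mul hu]

lemma phess_exp_mul (hw : ContDiffAt ℝ 2 w x) (K : ℝ) :
    phess n (fun y => Real.exp (K * w y)) x =
      (K * Real.exp (K * w x)) •
        (phess n w x + K • vecMulVec (pgrad n w x) (pgrad n w x)) := by
  ext i j
  have hexp : DifferentiableAt ℝ (fun y => Real.exp (K * w y)) x :=
    ((hw.differentiableAt two_ne_zero).const_mul K).exp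
  have pgrad_exp_near : (fun y => pgrad n (fun y => Real.exp (K * w y)) y j) =ᶠ[𝓝 x]
      fun y => Real.exp (K * w y) * (K * pgrad n w y j) := by
    filter_upwards [eventually_differentiableAt_of_contDiffAt (hw.of_le one_le_two)] with y hwy
    rw [pgrad_exp_mul hwy, Pi.smul_apply, smul_eq_mul]
    ring
  rw [phess_apply, pgrad_congr pgrad_exp_near,
    pgrad_mul hexp ((differentiableAt_pgrad_apply hw j).const_mul K),
    pgrad_exp_mul (hw.differentiableAt two_ne_zero),
    pgrad_const_mul (differentiableAt_pgrad_apply hw j)]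
  simp only [Pi.add_apply, Pi.smul_apply, Matrix.smul_apply, Matrix.add_apply, vecMulVec_apply,
    smul_eq_mul, phess_apply]
  ring

end GradientHessian

section LinearizedOperator

variable {n : ℕ} {A : EuclideanSpace ℝ (Fin n) → ℝ → (Fin n → ℝ) → Matrix (Fin n) (Fin n) ℝ}
  {F' : Matrix (Fin n) (Fin n) ℝ → Matrix (Fin n) (Fin n) ℝ}
  {u v w ubar : EuclideanSpace ℝ (Fin n) → ℝ} {x : EuclideanSpace ℝ (Fin n)}

lemma sum_ApDeriv_mul {z : ℝ} {p : Fin n → ℝ} {i j : Fin n}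
    (hA : DifferentiableAt ℝ (fun p => A x z p i j) p) (e : Fin n → ℝ) :
    ∑ k, ApDeriv n A x z p k i j * e k = dirDeriv (A x z) p e i j := by
  have partial_eq (k : Fin n) : ApDeriv n A x z p k i j =
      fderiv ℝ (fun p => A x z p i j) p (Pi.single k 1) :=
    (hA.hasFDerivAt.hasLineDerivAt (Pi.single k 1)).deriv
  conv_rhs => rw [dirDeriv, of_apply, pi_eq_sum_univ' e, map_sum]
  refine Finset.sum_congr rfl fun k _ => ?_
  rw [partial_eq, map_smul, smul_eq_mul, mul_comm]

lemma Lop_eq_frobeniusPairing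
    (hA : ∀ i j, DifferentiableAt ℝ (fun p => A x (u x) p i j) (pgrad n u x)) :
    Lop n A F' u v x = frobeniusPairing (F' (MA n A u x))
      (phess n v x - dirDeriv (A x (u x)) (pgrad n u x) (pgrad n v x)) := by
  simp only [Lop, frobeniusPairing_apply, Matrix.sub_apply, sum_ApDeriv_mul (hA _ _)]

lemma Lop_exp_mul (hA : ∀ i j, DifferentiableAt ℝ (fun p => A x (u x) p i j) (pgrad n u x))
    (hw : ContDiffAt ℝ 2 w x) (K : ℝ) :
    Lop n A F' u (fun y => Real.exp (K * w y)) x = K * Real.exp (K * w x) *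
      (Lop n A F' u w x + K * (pgrad n w x ⬝ᵥ F' (MA n A u x) *ᵥ pgrad n w x)) := by
  simp only [Lop_eq_frobeniusPairing hA, phess_exp_mul hw,
    pgrad_exp_mul (hw.differentiableAt two_ne_zero), dirDeriv_smul, ← smul_sub, map_smul,
    smul_eq_mul, map_sub, map_add, frobeniusPairing_vecMulVec_self]
  ring

lemma Lop_sub (hA : ∀ i j, DifferentiableAt ℝ (fun p => A x (u x) p i j) (pgrad n u x))
    (hubar : ContDiffAt ℝ 2 ubar x) (hu : ContDiffAt ℝ 2 u x) :
    Lop n A F' u (fun y => ubar y - u y) x =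
      frobeniusPairing (F' (MA n A u x)) (MAw n A u ubar x - MA n A u x) +
        frobeniusPairing (F' (MA n A u x))
          (taylorRemainder (A x (u x)) (pgrad n u x) (pgrad n ubar x)) := by
  rw [Lop_eq_frobeniusPairing hA, phess_sub hubar hu,
    pgrad_sub (hubar.differentiableAt two_ne_zero) (hu.differentiableAt two_ne_zero), ← map_add]
  congr 1
  simp only [MAw, MA, taylorRemainder]
  abel

lemma le_Lop_exp_mul_sub
    (hA : ∀ i j, DifferentiableAt ℝ (fun p => A x (u x) p i j) (pgrad n u x))
    (hubar : ContDiffAt ℝ 2 ubar x) (hu : ContDiffAt ℝ 2 u x) {K ε : ℝ} (hK : 0 ≤ K)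
    (hP : (F' (MA n A u x)).PosSemidef)
    (hremainder : -(ε * (F' (MA n A u x)).trace + K * ((pgrad n ubar x - pgrad n u x) ⬝ᵥ
        F' (MA n A u x) *ᵥ (pgrad n ubar x - pgrad n u x))) / 2 ≤
      frobeniusPairing (F' (MA n A u x))
        (taylorRemainder (A x (u x)) (pgrad n u x) (pgrad n ubar x))) :
    K * Real.exp (K * (ubar x - u x)) * (ε / 2 * (F' (MA n A u x)).trace +
        frobeniusPairing (F' (MA n A u x)) (MAw n A u ubar x - ε • 1 - MA n A u x)) ≤
      Lop n A F' u (fun y => Real.exp (K * (ubar y - u y))) x := by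
  rw [Lop_exp_mul hA (hubar.sub hu), Lop_sub hA hubar hu,
    pgrad_sub (hubar.differentiableAt two_ne_zero) (hu.differentiableAt two_ne_zero)]
  simp only [map_sub, map_smul, smul_eq_mul, frobeniusPairing_one]
  have quadratic_nonneg := mul_nonneg hK
    (hP.dotProduct_mulVec_nonneg (pgrad n ubar x - pgrad n u x))
  rw [star_trivial] at quadratic_nonneg
  refine mul_le_mul_of_nonneg_left ?_ (mul_nonneg hK (Real.exp_pos _).le)
  linarith

end LinearizedOperator

section BarrierEstimate

variable {n : ℕ} {S : Set (EuclideanSpace ℝ (Fin n))}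
  {A : EuclideanSpace ℝ (Fin n) → ℝ → (Fin n → ℝ) → Matrix (Fin n) (Fin n) ℝ}
  {ubar : EuclideanSpace ℝ (Fin n) → ℝ}

lemma sub_le_frobeniusPairing {ι : Type*} [Fintype ι] {Γ : Set (Matrix ι ι ℝ)}
    (hΓ : ∀ r ∈ Γ, r.IsSymm) {F : Matrix ι ι ℝ → ℝ} {P r s : Matrix ι ι ℝ}
    (hF : ConcaveOn ℝ Γ F) (hr : r ∈ Γ) (hs : s ∈ Γ)
    (hP : ∀ m : Matrix ι ι ℝ, m.IsSymm →
      HasDerivAt (fun t : ℝ => F (r + t • m)) (∑ i, ∑ j, P i j * m i j) 0) :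
    F s - F r ≤ frobeniusPairing P (s - r) :=
  sub_le_of_concaveOn_of_hasDerivAt hF hr hs (hP _ ((hΓ s hs).sub (hΓ r hr)))

lemma exists_forall_abs_le_and_norm_pgrad_le (hS : IsCompact S)
    (hubar : ∀ x ∈ S, ContDiffAt ℝ 1 ubar x) :
    ∃ R, ∀ x ∈ S, |ubar x| ≤ R ∧ ‖pgrad n ubar x‖ ≤ R := by
  obtain ⟨R₀, hR₀⟩ := hS.exists_bound_of_continuousOn
    fun x hx => (hubar x hx).continuousAt.continuousWithinAt
  obtain ⟨R₁, hR₁⟩ := hS.exists_bound_of_continuousOn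
    fun x hx => (continuousAt_pgrad (hubar x hx)).continuousWithinAt
  exact ⟨max R₀ R₁, fun x hx =>
    ⟨(hR₀ x hx).trans (le_max_left _ _), (hR₁ x hx).trans (le_max_right _ _)⟩⟩

lemma eventually_atTop_forall_neg_le_frobeniusPairing_of_regular (hS : IsCompact S)
    (hA : ∀ x ∈ S, ∀ z i j, ContDiff ℝ 2 fun p => A x z p i j)
    (hA_cont : ∀ i j, ContinuousOn (fun q : EuclideanSpace ℝ (Fin n) × ℝ × (Fin n → ℝ) =>
      iteratedFDeriv ℝ 2 (fun p => A q.1 q.2.1 p i j) q.2.2) (S ×ˢ univ))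
    (hA_reg : ∀ x ∈ S, ∀ (z : ℝ) (p ξ η : Fin n → ℝ), ∑ i, ξ i * η i = 0 →
      0 ≤ iteratedDeriv 2 (fun t : ℝ => ∑ i, ∑ j, A x z (p + t • η) i j * ξ i * ξ j) 0)
    {ε : ℝ} (hε : 0 < ε) (R : ℝ) :
    ∀ᶠ C : ℝ in atTop, ∀ x ∈ S, ∀ z : ℝ, |z| ≤ R → ∀ p q : Fin n → ℝ, ‖p‖ ≤ R → ‖q‖ ≤ R →
      ∀ P : Matrix (Fin n) (Fin n) ℝ, P.PosSemidef →
        -(ε * P.trace + C * ((q - p) ⬝ᵥ P *ᵥ (q - p))) / 2 ≤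
          frobeniusPairing P (taylorRemainder (A x z) p q) := by
  have reassociated_cont (i j : Fin n) : ContinuousOn
      (fun q : (EuclideanSpace ℝ (Fin n) × ℝ) × (Fin n → ℝ) =>
        iteratedFDeriv ℝ 2 (fun p => A q.1.1 q.1.2 p i j) q.2)
      ((S ×ˢ Metric.closedBall 0 R) ×ˢ univ) :=
    (hA_cont i j).comp (f := fun q : (EuclideanSpace ℝ (Fin n) × ℝ) × (Fin n → ℝ) =>
      (q.1.1, q.1.2, q.2)) (by fun_prop) fun q hq => ⟨hq.1.1, mem_univ _⟩
  filter_upwards [eventually_atTop_forall_neg_le_frobeniusPairing_taylorRemainder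
    (a := fun y : EuclideanSpace ℝ (Fin n) × ℝ => A y.1 y.2)
    (hS.prod (isCompact_closedBall 0 R)) (fun y hy => hA y.1 hy.1 y.2) reassociated_cont
    (fun y hy p e ξ hξe => by
      rw [dotProduct_dirDerivTwo_mulVec (hA y.1 hy.1 y.2)]
      exact hA_reg y.1 hy.1 y.2 p ξ e hξe) hε R] with C hC x hx z hz
  exact hC (x, z) ⟨hx, by simpa using hz⟩

theorem barrier_estimate_concave_case_general (hS : IsCompact S)
    (hA : ∀ x ∈ S, ∀ z i j, ContDiff ℝ 2 fun p => A x z p i j)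
    (hA_cont : ∀ i j, ContinuousOn (fun q : EuclideanSpace ℝ (Fin n) × ℝ × (Fin n → ℝ) =>
      iteratedFDeriv ℝ 2 (fun p => A q.1 q.2.1 p i j) q.2.2) (S ×ˢ univ))
    (hA_reg : ∀ x ∈ S, ∀ (z : ℝ) (p ξ η : Fin n → ℝ), ∑ i, ξ i * η i = 0 →
      0 ≤ iteratedDeriv 2 (fun t : ℝ => ∑ i, ∑ j, A x z (p + t • η) i j * ξ i * ξ j) 0)
    (hubar : ∀ x ∈ S, ContDiffAt ℝ 2 ubar x) {δbar : ℝ} (hδbar : 0 < δbar) (M₁ : ℝ) :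
    ∃ K > 0, ∃ δ > 0, ∀ Γ : Set (Matrix (Fin n) (Fin n) ℝ), (∀ r ∈ Γ, r.IsSymm) →
      ∀ (F : Matrix (Fin n) (Fin n) ℝ → ℝ)
        (F' : Matrix (Fin n) (Fin n) ℝ → Matrix (Fin n) (Fin n) ℝ),
        (∀ r ∈ Γ, ∀ s : Matrix (Fin n) (Fin n) ℝ, s.IsSymm →
          HasDerivAt (fun t : ℝ => F (r + t • s)) (∑ i, ∑ j, F' r i j * s i j) 0) →
        (∀ r ∈ Γ, (F' r).PosSemidef) → ConcaveOn ℝ Γ F →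
        ∀ u : EuclideanSpace ℝ (Fin n) → ℝ, ∀ x ∈ S, ContDiffAt ℝ 2 u x →
          |u x| + √(∑ i, pgrad n u x i ^ 2) ≤ M₁ →
          MA n A u x ∈ Γ → MAw n A u ubar x - δbar • 1 ∈ Γ →
          δ * Tcal n F' (MA n A u x) + K * Real.exp (K * (ubar x - u x)) *
              (F (MAw n A u ubar x - δbar • 1) - F (MA n A u x)) ≤
            Lop n A F' u (fun y => Real.exp (K * (ubar y - u y))) x := by
  obtain ⟨R, hR⟩ := exists_forall_abs_le_and_norm_pgrad_le hS
    fun x hx => (hubar x hx).of_le one_le_two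
  obtain ⟨K, remainder_bound, hK⟩ :=
    ((eventually_atTop_forall_neg_le_frobeniusPairing_of_regular hS hA hA_cont hA_reg hδbar
      (max M₁ R)).and (eventually_gt_atTop 0)).exists
  refine ⟨K, hK, K * Real.exp (-(K * (R + M₁))) * (δbar / 2), by positivity, ?_⟩
  intro Γ hΓ F F' hF' hF'_psd hF u x hx hu hu_bound hM hMw
  have hu_abs : |u x| ≤ M₁ := (le_add_of_nonneg_right (Real.sqrt_nonneg _)).trans hu_bound
  have hu_grad : ‖pgrad n u x‖ ≤ M₁ := (norm_le_sqrt_sum_sq _).trans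
    ((le_add_of_nonneg_left (abs_nonneg _)).trans hu_bound)
  have concavity := sub_le_frobeniusPairing hΓ hF hM hMw (hF' _ hM)
  have trace_nonneg := (hF'_psd _ hM).trace_nonneg
  have exp_lower : Real.exp (-(K * (R + M₁))) ≤ Real.exp (K * (ubar x - u x)) := by
    rw [← mul_neg]
    gcongr
    linarith [neg_abs_le (ubar x), le_abs_self (u x), (hR x hx).1]
  calc
    _ ≤ K * Real.exp (K * (ubar x - u x)) * (δbar / 2) * (F' (MA n A u x)).trace +
        K * Real.exp (K * (ubar x - u x)) *
          frobeniusPairing (F' (MA n A u x)) (MAw n A u ubar x - δbar • 1 - MA n A u x) := by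
      change K * _ * (δbar / 2) * (F' (MA n A u x)).trace + _ ≤ _
      gcongr
    _ = K * Real.exp (K * (ubar x - u x)) * (δbar / 2 * (F' (MA n A u x)).trace +
        frobeniusPairing (F' (MA n A u x)) (MAw n A u ubar x - δbar • 1 - MA n A u x)) := by
      ring
    _ ≤ _ := le_Lop_exp_mul_sub
      (fun i j => (hA x hx (u x) i j).differentiable two_ne_zero _) (hubar x hx) hu hK.le
      (hF'_psd _ hM) (remainder_bound x hx _ (hu_abs.trans (le_max_left _ _)) _ _
        (hu_grad.trans (le_max_left _ _)) ((hR x hx).2.trans (le_max_right _ _)) _ (hF'_psd _ hM))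

end BarrierEstimate

/-- Lemma 2.1 (i), case (a): the barrier estimate (2.8) for concave
`F` (conditions F1, F2) and regular `A`. -/
theorem barrier_estimate_concave_case
    (n : ℕ) (Ω : Set (EuclideanSpace ℝ (Fin n)))
    (hΩo : IsOpen Ω) (hΩb : Bornology.IsBounded Ω)
    (Γ : Set (Matrix (Fin n) (Fin n) ℝ))
    (hΓsym : ∀ r ∈ Γ, r.IsSymm)
    (hΓconv : Convex ℝ Γ)
    (hΓopen : ∀ r ∈ Γ, ∃ ε > 0, ∀ s : Matrix (Fin n) (Fin n) ℝ,
        s.IsSymm → (∀ i j, |s i j - r i j| < ε) → s ∈ Γ)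
    (hKΓ : ∀ m : Matrix (Fin n) (Fin n) ℝ, m.PosDef → m ∈ Γ)
    (hΓadd : ∀ r ∈ Γ, ∀ m : Matrix (Fin n) (Fin n) ℝ, m.PosDef → r + m ∈ Γ)
    (A : EuclideanSpace ℝ (Fin n) → ℝ → (Fin n → ℝ) → Matrix (Fin n) (Fin n) ℝ)
    (hAsym : ∀ x z p, (A x z p).IsSymm)
    (hAcont : Continuous (fun q : EuclideanSpace ℝ (Fin n) × ℝ × (Fin n → ℝ) =>
        A q.1 q.2.1 q.2.2))
    (hAp : ∀ x z i j, ContDiff ℝ 2 (fun p : Fin n → ℝ => A x z p i j))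
    (hAp2cont : ∀ i j, Continuous (fun q : EuclideanSpace ℝ (Fin n) × ℝ × (Fin n → ℝ) =>
        iteratedFDeriv ℝ 2 (fun p => A q.1 q.2.1 p i j) q.2.2))
    -- A is regular (co-dimension one convex in p)
    (hAreg : ∀ x ∈ closure Ω, ∀ (z : ℝ) (p ξ η : Fin n → ℝ), (∑ i, ξ i * η i) = 0 →
        0 ≤ iteratedDeriv 2
          (fun t : ℝ => ∑ i, ∑ j, A x z (p + t • η) i j * ξ i * ξ j) 0)
    (ubar : EuclideanSpace ℝ (Fin n) → ℝ) (hubar : ContDiff ℝ 2 ubar)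
    (δbar : ℝ) (hδbar : 0 < δbar) (M₁ : ℝ) (hM₁ : 0 < M₁) :
    ∃ K > 0, ∃ δ > 0,
      ∀ (F : Matrix (Fin n) (Fin n) ℝ → ℝ)
        (F' : Matrix (Fin n) (Fin n) ℝ → Matrix (Fin n) (Fin n) ℝ),
        -- F ∈ C¹(Γ) with gradient array F'
        (∀ r ∈ Γ, ∀ s : Matrix (Fin n) (Fin n) ℝ, s.IsSymm →
          HasDerivAt (fun t : ℝ => F (r + t • s)) (∑ i, ∑ j, F' r i j * s i j) 0) →
        -- F1
        (∀ r ∈ Γ, (F' r).PosDef) →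
        -- F2
        ConcaveOn ℝ Γ F →
        ∀ u : EuclideanSpace ℝ (Fin n) → ℝ, ContDiff ℝ 2 u →
          -- |u|_{1;Ω} ≤ M₁
          (∀ x ∈ closure Ω, |u x| + Real.sqrt (∑ i, pgrad n u x i ^ 2) ≤ M₁) →
          -- u admissible in Ω̄
          (∀ x ∈ closure Ω, MA n A u x ∈ Γ) →
          -- (M_u[ū] − δ̄ I)(Ω̄) ⊂ Γ
          (∀ x ∈ closure Ω,
            MAw n A u ubar x - δbar • (1 : Matrix (Fin n) (Fin n) ℝ) ∈ Γ) →
          -- conclusion: Lη ≥ δ𝒯 + K e^{K(ū−u)} (F(M_u[ū] − δ̄I) − F(M[u]))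
          ∀ x ∈ Ω,
            δ * Tcal n F' (MA n A u x) +
              K * Real.exp (K * (ubar x - u x)) *
                (F (MAw n A u ubar x - δbar • (1 : Matrix (Fin n) (Fin n) ℝ)) -
                  F (MA n A u x)) ≤
            Lop n A F' u (fun y => Real.exp (K * (ubar y - u y))) x := by
  obtain ⟨K, hK, δ, hδ, barrier⟩ := barrier_estimate_concave_case_general hΩb.isCompact_closure
    (fun x _ => hAp x) (fun i j => (hAp2cont i j).continuousOn) hAreg
    (fun x _ => hubar.contDiffAt) hδbar M₁
  exact ⟨K, hK, δ, hδ, fun F F' hF' hF'_pos hF u hu hu_bound hM hMw x hx =>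
    barrier Γ hΓsym F F' hF' (fun r hr => (hF'_pos r hr).posSemidef) hF u x (subset_closure hx)
      hu.contDiffAt (hu_bound x (subset_closure hx)) (hM x (subset_closure hx))
      (hMw x (subset_closure hx))⟩

end
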